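/- Let F be a field with char F ≠ 2, let r, m ≥ 0 be integers and d = m + 2r + 1. Let λ : {1,…,d} → Fˣ, set μ_i = λ_i·λ_{d+1−i}⁻¹, and assume μ_i = 1 for every i ∈ {1,…,r} ∪ {d−r,…,d}. Let N ∈ GL_d(F) be the matrix with N_{d+1−i,i} = λ_i for 1 ≤ i ≤ d and all other entries 0, and define φ : M_d(F) → M_d(F) by φ(X) = −N⁻¹·Xᵀ·N (so φ(E_{i,j}) = −(λ_{d+1−i}/λ_{d+1−j})·E_{d+1−j,d+1−i}). Let 𝔫 ⊆ M_d(F) be the span of the elementary matrices E_{i,j} with i < j and not (r < i and j ≤ d−r). Then φ(𝔫) = 𝔫; setting 𝔫^φ = {X ∈ 𝔫 : φ(X) = X}, the map id − φ induces an endomorphism of the quotient space 𝔫/𝔫^φ, and the determinant of this induced endomorphism equals 2^{r² + r + r·m''} · ( ∏_{i} (1 − μ_i) )^{r}, where the product is over those i with r+1 ≤ i ≤ d−r−1 and μ_i ≠ 1, and m'' = #{i : r+1 ≤ i ≤ d−r−1 and μ_i = 1}. -/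

import Mathlib

open Matrix

/-- The matrix `N` with `N_{d+1-i, i} = λ_i` for `1 ≤ i ≤ d` and all other entries `0`
(written 0-based: `N p q = λ_q` when `p + q = d - 1`). -/
def NmatJLW (F : Type*) [Field F] (d : ℕ) (lam : Fin d → Fˣ) : Matrix (Fin d) (Fin d) F :=
  Matrix.of fun p q => if (p : ℕ) + (q : ℕ) = d - 1 then (lam q : F) else 0

/-- Transposition as a linear map on `d × d` matrices. -/
def transposeLM (F : Type*) [Field F] (d : ℕ) :
    Matrix (Fin d) (Fin d) F →ₗ[F] Matrix (Fin d) (Fin d) F where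
  toFun X := Xᵀ
  map_add' X Y := by simp [Matrix.transpose_add]
  map_smul' c X := by simp [Matrix.transpose_smul]

/-- The linear map `φ : M_d(F) → M_d(F)`, `φ(X) = -N⁻¹ · Xᵀ · N`. -/
noncomputable def phiJLW (F : Type*) [Field F] (d : ℕ) (lam : Fin d → Fˣ) :
    Matrix (Fin d) (Fin d) F →ₗ[F] Matrix (Fin d) (Fin d) F :=
  -((LinearMap.mulLeft F (NmatJLW F d lam)⁻¹).comp
      ((LinearMap.mulRight F (NmatJLW F d lam)).comp (transposeLM F d)))

/-- The span `𝔫` of the elementary matrices `E_{i,j}` with `i < j` and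
`¬ (r < i ∧ j ≤ d - r)` (1-based), i.e. the matrices vanishing at all other
positions. -/
def nSubJLW (F : Type*) [Field F] (d r : ℕ) : Submodule F (Matrix (Fin d) (Fin d) F) where
  carrier := {X | ∀ a b : Fin d,
    ¬((a : ℕ) < (b : ℕ) ∧ ¬(r ≤ (a : ℕ) ∧ (b : ℕ) + 1 ≤ d - r)) → X a b = 0}
  add_mem' := by
    intro X Y hX hY a b h
    simp [Matrix.add_apply, hX a b h, hY a b h]
  zero_mem' := by intro a b h; rfl
  smul_mem' := by
    intro c X hX a b h
    simp [Matrix.smul_apply, hX a b h]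

/-- `𝔫^φ = {X ∈ 𝔫 : φ(X) = X}`, as a submodule of `𝔫`. -/
noncomputable def fixSubJLW (F : Type*) [Field F] (d r : ℕ) (lam : Fin d → Fˣ) :
    Submodule F ↥(nSubJLW F d r) :=
  Submodule.comap (nSubJLW F d r).subtype
    (LinearMap.ker (phiJLW F d lam - LinearMap.id))

/-- The index `d + 1 - i` (1-based), i.e. `d - 1 - a` (0-based). -/
def revIdxJLW {d : ℕ} (a : Fin d) : Fin d := ⟨d - 1 - (a : ℕ), by have h := a.isLt; omega⟩

/-- `μ_i = λ_i · λ_{d+1-i}⁻¹`. -/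
def muJLW {F : Type*} [Field F] {d : ℕ} (lam : Fin d → Fˣ) (a : Fin d) : F :=
  (lam a : F) * (((lam (revIdxJLW a))⁻¹ : Fˣ) : F)


lemma rv_rv {d : ℕ} (a : Fin d) : revIdxJLW (revIdxJLW a) = a := by
  ext; simp only [revIdxJLW]; omega

lemma N_apply' {F : Type*} [Field F] {d : ℕ} (lam : Fin d → Fˣ) (p q : Fin d) :
    NmatJLW F d lam p q = if p = revIdxJLW q then (lam q : F) else 0 := by
  have : ((p : ℕ) + (q : ℕ) = d - 1) ↔ p = revIdxJLW q := by
    rw [Fin.ext_iff]; simp only [revIdxJLW]; omega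
  simp only [NmatJLW, Matrix.of_apply, this]

lemma N_inv' {F : Type*} [Field F] {d : ℕ} (lam : Fin d → Fˣ) :
    (NmatJLW F d lam)⁻¹ = Matrix.of fun p q => if q = revIdxJLW p then
      (((lam p)⁻¹ : Fˣ) : F) else 0 := by
  apply Matrix.inv_eq_left_inv
  ext p q
  simp only [Matrix.mul_apply, Matrix.of_apply, N_apply', ite_mul, zero_mul, Finset.sum_ite_eq',
    Finset.mem_univ, if_true, Matrix.one_apply]
  have : (revIdxJLW p = revIdxJLW q) ↔ p = q :=
    ⟨fun h => by rw [← rv_rv p, h, rv_rv], fun h => by rw [h]⟩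
  simp only [this]
  by_cases h : p = q
  · subst h; simp
  · simp [h]

lemma phi_apply' {F : Type*} [Field F] {d : ℕ} (lam : Fin d → Fˣ)
    (X : Matrix (Fin d) (Fin d) F) (a b : Fin d) :
    phiJLW F d lam X a b =
      -((lam b : F) * (((lam a)⁻¹ : Fˣ) : F)) * X (revIdxJLW b) (revIdxJLW a) := by
  have : phiJLW F d lam X = -((NmatJLW F d lam)⁻¹ * (Xᵀ * NmatJLW F d lam)) := rfl
  rw [this, N_inv']
  simp only [Matrix.neg_apply, Matrix.mul_apply, Matrix.of_apply, N_apply', ite_mul, zero_mul,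
    mul_ite, mul_zero, Finset.sum_ite_eq',
    Finset.mem_univ, if_true, Matrix.transpose_apply]
  ring

lemma phi_single' {F : Type*} [Field F] {d : ℕ} (lam : Fin d → Fˣ) (i j : Fin d) :
      phiJLW F d lam (Matrix.single i j (1 : F))
        = (-((lam (revIdxJLW i) : F) * (((lam (revIdxJLW j))⁻¹ : Fˣ) : F))) •
            Matrix.single (revIdxJLW j) (revIdxJLW i) (1 : F) := by
  ext a b
  rw [phi_apply']
  simp only [Matrix.smul_apply, Matrix.single_apply, smul_eq_mul]
  have : (i = revIdxJLW b ∧ j = revIdxJLW a) ↔ (revIdxJLW j = a ∧ revIdxJLW i = b) :=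
    ⟨fun ⟨h, h'⟩ => by rw [h, h', rv_rv, rv_rv]; simp, fun ⟨h, h'⟩ => by rw [← h, ← h', rv_rv, rv_rv]; simp⟩
  by_cases h : i = revIdxJLW b ∧ j = revIdxJLW a
  · rw [if_pos h, if_pos (this.1 h), (this.1 h).1, (this.1 h).2]
  · rw [if_neg h, if_neg (fun h' => h (this.2 h'))]; simp

lemma phi_mem {F : Type*} [Field F] {d r : ℕ} (lam : Fin d → Fˣ) {X : Matrix (Fin d) (Fin d) F}
    (hX : X ∈ nSubJLW F d r) : phiJLW F d lam X ∈ nSubJLW F d r := by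
  intro a b h
  rw [phi_apply', hX (revIdxJLW b) (revIdxJLW a), mul_zero]
  have := a.2
  have := b.2
  simp only [revIdxJLW]
  omega

lemma phi_image {F : Type*} [Field F] {d r : ℕ} (lam : Fin d → Fˣ) :
    ⇑(phiJLW F d lam) '' (nSubJLW F d r : Set (Matrix (Fin d) (Fin d) F))
      = (nSubJLW F d r : Set (Matrix (Fin d) (Fin d) F)) := by
  apply Set.Subset.antisymm
  · rintro _ ⟨X, hX, rfl⟩
    exact phi_mem lam hX
  · intro Y hY
    refine ⟨Matrix.of fun a b => -((lam (revIdxJLW b) : F) * (((lam (revIdxJLW a))⁻¹ : Fˣ) : F))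
      * Y (revIdxJLW b) (revIdxJLW a), ?_, ?_⟩
    · intro a b h
      rw [Matrix.of_apply, hY (revIdxJLW b) (revIdxJLW a), mul_zero]
      have := a.2
      have := b.2
      simp only [revIdxJLW]
      omega
    · ext a b
      rw [phi_apply', Matrix.of_apply]
      simp only [rv_rv, Units.val_inv_eq_inv_val]
      have := (lam a).ne_zero
      have := (lam b).ne_zero
      field_simp

/-- Pairs on which `μ ≠ 1` in the middle block. -/
def inB {F : Type*} [Field F] {r m : ℕ} (lam : Fin (m + 2 * r + 1) → Fˣ)
    (p : Fin (m + 2 * r + 1) × Fin (m + 2 * r + 1)) : Prop :=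
  (p.1 : ℕ) < r ∧ (r ≤ (p.2 : ℕ) ∧ (p.2 : ℕ) + r + 2 ≤ m + 2 * r + 1 ∧ muJLW lam p.2 ≠ 1)

/-- Orbit representatives. -/
def inA {r m : ℕ} (p : Fin (m + 2 * r + 1) × Fin (m + 2 * r + 1)) : Prop :=
  (p.1 : ℕ) < r ∧ (p.1 : ℕ) < p.2 ∧ (p.1 : ℕ) + p.2 ≤ m + 2 * r

/-- Orbit representatives on which `φ² = 1`. -/
def inA0 {F : Type*} [Field F] {r m : ℕ} (lam : Fin (m + 2 * r + 1) → Fˣ)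
    (p : Fin (m + 2 * r + 1) × Fin (m + 2 * r + 1)) : Prop :=
  inA p ∧ ¬ inB lam p

lemma mu_eq_one_iff {F : Type*} [Field F] {d : ℕ} (lam : Fin d → Fˣ) (a : Fin d) :
    muJLW lam a = 1 ↔ lam (revIdxJLW a) = lam a := by
  have : muJLW lam a = ((lam a * (lam (revIdxJLW a))⁻¹ : Fˣ) : F) := by simp [muJLW]
  rw [this, Units.val_eq_one, mul_inv_eq_one, eq_comm]

lemma inB_inA {F : Type*} [Field F] {r m : ℕ} {lam : Fin (m + 2 * r + 1) → Fˣ}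
    {p : Fin (m + 2 * r + 1) × Fin (m + 2 * r + 1)} (h : inB lam p) : inA p := by
  obtain ⟨h1, h2, h3, h4⟩ := h
  refine ⟨h1, ?_, ?_⟩ <;> omega

section
variable {F : Type*} [Field F] {r m : ℕ} (lam : Fin (m + 2 * r + 1) → Fˣ)

/-- coordinate of `X - φ X`. -/
noncomputable def uLin (p : Fin (m + 2 * r + 1) × Fin (m + 2 * r + 1)) :
    Matrix (Fin (m + 2 * r + 1)) (Fin (m + 2 * r + 1)) F →ₗ[F] F where
  toFun X := X p.1 p.2 + ((lam p.2 : F) * (lam p.1 : F)⁻¹) * X (revIdxJLW p.2) (revIdxJLW p.1)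
  map_add' X Y := by simp only [Matrix.add_apply]; ring
  map_smul' c X := by simp only [Matrix.smul_apply, smul_eq_mul, RingHom.id_apply]; ring

lemma uLin_apply (p : Fin (m + 2 * r + 1) × Fin (m + 2 * r + 1))
    (X : Matrix (Fin (m + 2 * r + 1)) (Fin (m + 2 * r + 1)) F) :
    uLin lam p X = X p.1 p.2 +
      ((lam p.2 : F) * (lam p.1 : F)⁻¹) * X (revIdxJLW p.2) (revIdxJLW p.1) := rfl

/-- matrix coordinate. -/
def coLin (p : Fin (m + 2 * r + 1) × Fin (m + 2 * r + 1)) :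
    Matrix (Fin (m + 2 * r + 1)) (Fin (m + 2 * r + 1)) F →ₗ[F] F where
  toFun X := X p.1 p.2
  map_add' _ _ := rfl
  map_smul' _ _ := rfl

lemma coLin_apply (p : Fin (m + 2 * r + 1) × Fin (m + 2 * r + 1))
    (X : Matrix (Fin (m + 2 * r + 1)) (Fin (m + 2 * r + 1)) F) :
    coLin p X = X p.1 p.2 := rfl

/-- The map to the model space of the quotient. -/
noncomputable def piLin : Matrix (Fin (m + 2 * r + 1)) (Fin (m + 2 * r + 1)) F →ₗ[F]
    ({p // inA0 lam p} → F) × ({p // inB lam p} → (Fin 2 → F)) :=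
  LinearMap.prod (LinearMap.pi fun p => uLin lam p.1)
    (LinearMap.pi fun p => LinearMap.pi ![uLin lam p.1, coLin p.1])

/-- The model of `id - φ`. -/
noncomputable def DLin : (({p // inA0 lam p} → F) × ({p // inB lam p} → (Fin 2 → F))) →ₗ[F]
    (({p // inA0 lam p} → F) × ({p // inB lam p} → (Fin 2 → F))) :=
  LinearMap.prodMap ((2 : F) • LinearMap.id)
    (LinearMap.pi fun p => (Matrix.toLin' !![2, -(1 - muJLW lam p.1.2); 1, 0]).comp
      (LinearMap.proj p))

lemma mu_A0 (hmu : ∀ a : Fin (m + 2 * r + 1),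
      ((a : ℕ) < r ∨ m + r ≤ (a : ℕ)) → muJLW lam a = 1)
    {p : Fin (m + 2 * r + 1) × Fin (m + 2 * r + 1)} (h : inA0 lam p) : muJLW lam p.2 = 1 := by
  by_contra hne
  apply h.2
  have := mt (hmu p.2) hne
  push Not at this
  exact ⟨h.1.1, this.1, by omega, hne⟩

lemma uT (hmu : ∀ a : Fin (m + 2 * r + 1),
      ((a : ℕ) < r ∨ m + r ≤ (a : ℕ)) → muJLW lam a = 1)
    {p : Fin (m + 2 * r + 1) × Fin (m + 2 * r + 1)} (h : inA p)
    (X : Matrix (Fin (m + 2 * r + 1)) (Fin (m + 2 * r + 1)) F) :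
    uLin lam p (X - phiJLW F _ lam X) = 2 * uLin lam p X - (1 - muJLW lam p.2) * X p.1 p.2 := by
  have h1 := (mu_eq_one_iff lam _).1 (hmu p.1 (Or.inl h.1))
  simp only [uLin_apply, Matrix.sub_apply, phi_apply', rv_rv, muJLW, h1,
    Units.val_inv_eq_inv_val]
  have := (lam p.1).ne_zero
  have := (lam p.2).ne_zero
  have := (lam (revIdxJLW p.2)).ne_zero
  field_simp
  ring

lemma coT (p : Fin (m + 2 * r + 1) × Fin (m + 2 * r + 1))
    (X : Matrix (Fin (m + 2 * r + 1)) (Fin (m + 2 * r + 1)) F) :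
    coLin p (X - phiJLW F _ lam X) = uLin lam p X := by
  simp only [coLin_apply, uLin_apply, Matrix.sub_apply, phi_apply',
    Units.val_inv_eq_inv_val]
  ring

lemma D_pi (hmu : ∀ a : Fin (m + 2 * r + 1),
      ((a : ℕ) < r ∨ m + r ≤ (a : ℕ)) → muJLW lam a = 1)
    (X : Matrix (Fin (m + 2 * r + 1)) (Fin (m + 2 * r + 1)) F) :
    DLin lam (piLin lam X) = piLin lam (X - phiJLW F _ lam X) := by
  apply Prod.ext
  · funext p
    change (2 : F) * uLin lam p.1 X = uLin lam p.1 (X - phiJLW F _ lam X)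
    rw [uT lam hmu p.2.1, mu_A0 lam hmu p.2]; ring
  · funext p
    change Matrix.toLin' !![2, -(1 - muJLW lam p.1.2); 1, 0]
      (fun k => (![uLin lam p.1, coLin p.1] k : _ →ₗ[F] F) X) =
      (fun k => (![uLin lam p.1, coLin p.1] k : _ →ₗ[F] F) (X - phiJLW F _ lam X))
    funext k
    rw [Matrix.toLin'_apply]
    fin_cases k
    · simp [Matrix.mulVec, dotProduct, Fin.sum_univ_two]
      rw [← map_sub, uT lam hmu (inB_inA p.2)]
      simp only [coLin_apply]; ring
    · simp [Matrix.mulVec, dotProduct, Fin.sum_univ_two]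
      rw [← map_sub, coT]

lemma pi_zero_iff (X : Matrix (Fin (m + 2 * r + 1)) (Fin (m + 2 * r + 1)) F) :
    piLin lam X = 0 ↔ (∀ p, inA0 lam p → uLin lam p X = 0) ∧
      (∀ p, inB lam p → uLin lam p X = 0 ∧ X p.1 p.2 = 0) := by
  constructor
  · intro h
    refine ⟨fun p hp => ?_, fun p hp => ⟨?_, ?_⟩⟩
    · exact congrFun (congrArg Prod.fst h) ⟨p, hp⟩
    · exact congrFun (congrFun (congrArg Prod.snd h) ⟨p, hp⟩) 0
    · exact congrFun (congrFun (congrArg Prod.snd h) ⟨p, hp⟩) 1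
  · rintro ⟨h1, h2⟩
    apply Prod.ext
    · funext p; exact h1 p.1 p.2
    · funext p k
      fin_cases k
      · exact (h2 p.1 p.2).1
      · exact (h2 p.1 p.2).2

lemma ker_pi (hmu : ∀ a : Fin (m + 2 * r + 1),
      ((a : ℕ) < r ∨ m + r ≤ (a : ℕ)) → muJLW lam a = 1)
    {X : Matrix (Fin (m + 2 * r + 1)) (Fin (m + 2 * r + 1)) F} (hX : X ∈ nSubJLW F _ r) :
    piLin lam X = 0 ↔ phiJLW F _ lam X = X := by
  rw [pi_zero_iff]
  constructor
  · rintro ⟨h1, h2⟩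
    have hu : ∀ p, inA p → uLin lam p X = 0 := fun p hp => by
      by_cases hb : inB lam p
      · exact (h2 p hb).1
      · exact h1 p ⟨hp, hb⟩
    ext a b
    have ha := a.2
    have hb := b.2
    rw [phi_apply', Units.val_inv_eq_inv_val]
    by_cases hn : ((a : ℕ) < (b : ℕ) ∧ ¬(r ≤ (a : ℕ) ∧ (b : ℕ) + 1 ≤ (m + 2 * r + 1) - r))
    · by_cases hab : (a : ℕ) + b ≤ m + 2 * r
      · have := hu (a, b) ⟨by dsimp only; omega, by dsimp only; omega, by dsimp only; omega⟩
        rw [uLin_apply] at this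
        dsimp only at this
        linear_combination -this
      · have hA : inA (r := r) (m := m) (revIdxJLW b, revIdxJLW a) :=
          ⟨by simp only [revIdxJLW]; omega, by simp only [revIdxJLW]; omega,
            by simp only [revIdxJLW]; omega⟩
        have hu' := hu _ hA
        rw [uLin_apply] at hu'
        simp only [rv_rv] at hu'
        have e1 := (mu_eq_one_iff lam _).1 (hmu (revIdxJLW b) (Or.inl hA.1))
        rw [rv_rv] at e1
        have n1 := (lam a).ne_zero
        have n2 := (lam b).ne_zero
        have n3 := (lam (revIdxJLW a)).ne_zero
        by_cases hB : inB lam (revIdxJLW b, revIdxJLW a)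
        · have h0 := (h2 _ hB).2
          dsimp only at h0
          rw [h0, zero_add, ← e1] at hu'
          rw [h0, mul_zero]
          symm
          simpa [n1, n2, n3] using hu'
        · have e2 := (mu_eq_one_iff lam _).1 (mu_A0 lam hmu ⟨hA, hB⟩)
          dsimp only at e2
          rw [rv_rv] at e2
          rw [← e1, ← e2] at hu'
          have : X (revIdxJLW b) (revIdxJLW a) = -((lam a : F) * (lam b : F)⁻¹ * X a b) := by
            linear_combination hu'
          rw [this]
          field_simp
    · rw [hX a b hn, hX (revIdxJLW b) (revIdxJLW a), mul_zero]
      simp only [revIdxJLW]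
      omega
  · intro h
    have hu : ∀ p, uLin lam p X = 0 := fun p => by
      rw [← coT, h, sub_self, map_zero]
    refine ⟨fun p _ => hu p, fun p hp => ⟨hu p, ?_⟩⟩
    have := uT lam hmu (inB_inA hp) X
    rw [h, sub_self, map_zero, hu, mul_zero, zero_sub, eq_comm, neg_eq_zero] at this
    exact (mul_eq_zero.1 this).resolve_left (sub_ne_zero.2 (Ne.symm hp.2.2.2))

open Classical in
lemma pi_surj (hF : (2 : F) ≠ 0) (hmu : ∀ a : Fin (m + 2 * r + 1),
      ((a : ℕ) < r ∨ m + r ≤ (a : ℕ)) → muJLW lam a = 1)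
    (y : ({p // inA0 lam p} → F) × ({p // inB lam p} → (Fin 2 → F))) :
    ∃ X ∈ nSubJLW F (m + 2 * r + 1) r, piLin lam X = y := by
  obtain ⟨f, g⟩ := y
  let F0 : Fin (m + 2 * r + 1) × Fin (m + 2 * r + 1) → F :=
    fun p => if h : inA0 lam p then f ⟨p, h⟩ else 0
  let G : Fin 2 → Fin (m + 2 * r + 1) × Fin (m + 2 * r + 1) → F :=
    fun k p => if h : inB lam p then g ⟨p, h⟩ k else 0
  let X : Matrix (Fin (m + 2 * r + 1)) (Fin (m + 2 * r + 1)) F := Matrix.of fun a b =>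
    if (a : ℕ) + b ≤ m + 2 * r then F0 (a, b) / 2 + G 1 (a, b)
    else ((lam (revIdxJLW a) : F) * (lam (revIdxJLW b) : F)⁻¹)⁻¹ *
      (F0 (revIdxJLW b, revIdxJLW a) / 2 +
        (G 0 (revIdxJLW b, revIdxJLW a) - G 1 (revIdxJLW b, revIdxJLW a)))
  have hF0 : ∀ p, ¬ inA p → F0 p = 0 := fun p hp => dif_neg (fun h => hp h.1)
  have hG : ∀ k p, ¬ inA p → G k p = 0 := fun k p hp => dif_neg (fun h => hp (inB_inA h))
  have hx : ∀ p, inA p → X p.1 p.2 = F0 p / 2 + G 1 p := fun p hp => if_pos hp.2.2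
  have hu : ∀ p, inA p → uLin lam p X = F0 p + G 0 p := by
    intro p hp
    obtain ⟨i, j⟩ := p
    have hi := i.2
    have hj := j.2
    obtain ⟨p1, p2, p3⟩ := hp
    dsimp only at p1 p2 p3
    rw [uLin_apply, hx _ ⟨p1, p2, p3⟩]
    dsimp only
    have n1 := (lam i).ne_zero
    have n2 := (lam j).ne_zero
    by_cases hij : (i : ℕ) + j = m + 2 * r
    · have e : j = revIdxJLW i := by ext; simp only [revIdxJLW]; omega
      have e1 := (mu_eq_one_iff lam _).1 (hmu i (Or.inl p1))
      rw [e, e1, rv_rv, ← e, hx (i, j) ⟨p1, p2, p3⟩]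
      have hB : ¬ inB lam (i, j) := by
        rintro ⟨_, _, h, _⟩
        dsimp only at h
        omega
      have : ∀ k, G k (i, j) = 0 := fun k => dif_neg hB
      rw [this, this]
      field_simp
      ring
    · have : X (revIdxJLW j) (revIdxJLW i) = ((lam j : F) * (lam i : F)⁻¹)⁻¹ *
          (F0 (i, j) / 2 + (G 0 (i, j) - G 1 (i, j))) := by
        change ite _ _ _ = _
        rw [if_neg (by simp only [revIdxJLW]; omega)]
        simp only [rv_rv]
      rw [this, ← mul_assoc, mul_inv_cancel₀ (by simp), one_mul]
      field_simp
      ring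
  refine ⟨X, ?_, ?_⟩
  · intro a b h
    change ite _ _ _ = _
    have ha := a.2
    have hb := b.2
    split_ifs with hab
    · have : ¬ inA (a, b) := by
        rintro ⟨h1, h2, h3⟩
        dsimp only at h1 h2 h3
        omega
      rw [hF0 _ this, hG _ _ this]; simp
    · have : ¬ inA (r := r) (m := m) (revIdxJLW b, revIdxJLW a) := by
        rintro ⟨h1, h2, h3⟩
        simp only [revIdxJLW] at h1 h2 h3
        omega
      rw [hF0 _ this, hG _ _ this, hG _ _ this]; simp
  · apply Prod.ext
    · funext p
      change uLin lam p.1 X = f p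
      rw [hu _ p.2.1]
      have h1 : F0 p.1 = f p := dif_pos p.2
      have h2 : G 0 p.1 = 0 := dif_neg p.2.2
      rw [h1, h2, add_zero]
    · funext p
      have h1 : F0 p.1 = 0 := dif_neg fun h => h.2 p.2
      have h2 : ∀ k, G k p.1 = g p k := fun k => dif_pos p.2
      funext k
      fin_cases k
      · change uLin lam p.1 X = g p 0
        rw [hu _ (inB_inA p.2), h1, h2, zero_add]
      · change X p.1.1 p.1.2 = g p 1
        rw [hx _ (inB_inA p.2), h1, h2]; simp

open Classical in
lemma det_D : LinearMap.det (DLin lam) =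
    (2 : F) ^ (Fintype.card {p // inA0 lam p}) *
      ∏ p : {p // inB lam p}, (1 - muJLW lam p.1.2) := by
  rw [DLin, LinearMap.det_prodMap, LinearMap.det_pi, LinearMap.det_smul, LinearMap.det_id,
    mul_one, Module.finrank_fintype_fun_eq_card]
  congr 1
  apply Finset.prod_congr rfl
  intro p _
  rw [LinearMap.det_toLin', Matrix.det_fin_two_of]
  ring

open Classical in
lemma filter_B : (Finset.univ.filter (fun p => inB lam p)) =
    (Finset.univ.filter (fun a : Fin (m + 2 * r + 1) => (a : ℕ) < r)) ×ˢ
    (Finset.univ.filter (fun a : Fin (m + 2 * r + 1) =>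
      r ≤ (a : ℕ) ∧ (a : ℕ) + r + 2 ≤ m + 2 * r + 1 ∧ muJLW lam a ≠ 1)) := by
  ext p
  rw [Finset.mem_filter, Finset.mem_product, Finset.mem_filter, Finset.mem_filter]
  simp only [Finset.mem_univ, true_and, inB]

lemma card_lt_r : (Finset.univ.filter (fun a : Fin (m + 2 * r + 1) => (a : ℕ) < r)).card = r := by
  rw [Fin.card_filter_val_lt]; omega

open Classical in
lemma prod_B : ∏ p : {p // inB lam p}, (1 - muJLW lam p.1.2) =
    (∏ a ∈ Finset.univ.filter
            (fun a : Fin (m + 2 * r + 1) =>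
              r ≤ (a : ℕ) ∧ (a : ℕ) + r + 2 ≤ m + 2 * r + 1 ∧ muJLW lam a ≠ 1),
          (1 - muJLW lam a)) ^ r := by
  rw [← Finset.prod_subtype (Finset.univ.filter (fun p => inB lam p)) (by simp)
    (fun p => 1 - muJLW lam p.2), filter_B, Finset.prod_product]
  dsimp only
  rw [Finset.prod_const, card_lt_r]

open Classical in
lemma card_A : (Finset.univ.filter (fun p => inA (r := r) (m := m) p)).card =
    r ^ 2 + r + r * m := by
  rw [Finset.card_filter, Fintype.sum_prod_type]
  have h1 : ∀ i : Fin (m + 2 * r + 1), (∑ j, if inA (r := r) (m := m) (i, j) then 1 else 0) =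
      if (i : ℕ) < r then m + 2 * r - 2 * i else 0 := by
    intro i
    rw [← Finset.card_filter]
    have hi := i.2
    split_ifs with h
    · have : Finset.univ.filter (fun j => inA (r := r) (m := m) (i, j)) =
          Finset.Ioc i (revIdxJLW i) := by
        ext j
        rw [Finset.mem_filter]
        simp only [Finset.mem_univ, true_and, inA, Finset.mem_Ioc,
          Fin.lt_def, Fin.le_def, revIdxJLW]
        omega
      rw [this, Fin.card_Ioc]
      simp only [revIdxJLW]
      omega
    · rw [Finset.card_eq_zero, Finset.filter_eq_empty_iff]
      intro j _ hj
      exact h hj.1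
  simp only [h1]
  rw [Fin.sum_univ_eq_sum_range (fun i => if i < r then m + 2 * r - 2 * i else 0),
    ← Finset.sum_filter]
  have h2 : (Finset.range (m + 2 * r + 1)).filter (fun i => i < r) = Finset.range r := by
    ext i; simp only [Finset.mem_filter, Finset.mem_range]; omega
  rw [h2]
  have h3 : ∀ k ≤ r, ∑ i ∈ Finset.range k, (m + 2 * r - 2 * i) + k ^ 2 = k * (m + 2 * r) + k := by
    intro k
    induction k with
    | zero => simp
    | succ k ih =>
      intro hk
      have := ih (by omega)
      rw [Finset.sum_range_succ]
      have h4 : m + 2 * r - 2 * k + 2 * k = m + 2 * r := by omega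
      nlinarith
  have := h3 r le_rfl
  nlinarith

open Classical in
lemma card_A0 : Fintype.card {p // inA0 lam p} =
    r ^ 2 + r + r * (Finset.univ.filter
            (fun a : Fin (m + 2 * r + 1) =>
              r ≤ (a : ℕ) ∧ (a : ℕ) + r + 2 ≤ m + 2 * r + 1 ∧ muJLW lam a = 1)).card := by
  rw [Fintype.card_subtype]
  have e1 : (Finset.univ.filter (fun p => inA0 lam p)).card +
      (Finset.univ.filter (fun p => inB lam p)).card = r ^ 2 + r + r * m := by
    rw [← card_A, ← Finset.card_filter_add_card_filter_not (s := Finset.univ.filter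
      (fun p => inA (r := r) (m := m) p)) (fun p => inB lam p), add_comm]
    rw [Finset.filter_filter, Finset.filter_filter]
    congr 2
    · ext p
      rw [Finset.mem_filter, Finset.mem_filter]
      simp only [Finset.mem_univ, true_and]
      exact ⟨fun h => ⟨inB_inA h, h⟩, fun h => h.2⟩
    · ext p
      rw [Finset.mem_filter, Finset.mem_filter]
      rfl
  rw [filter_B, Finset.card_product, card_lt_r] at e1
  have e2 : (Finset.univ.filter (fun a : Fin (m + 2 * r + 1) =>
      r ≤ (a : ℕ) ∧ (a : ℕ) + r + 2 ≤ m + 2 * r + 1 ∧ muJLW lam a = 1)).card +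
      (Finset.univ.filter (fun a : Fin (m + 2 * r + 1) =>
      r ≤ (a : ℕ) ∧ (a : ℕ) + r + 2 ≤ m + 2 * r + 1 ∧ muJLW lam a ≠ 1)).card = m := by
    have : (Finset.univ.filter (fun a : Fin (m + 2 * r + 1) =>
        r ≤ (a : ℕ) ∧ (a : ℕ) + r + 2 ≤ m + 2 * r + 1)).card = m := by
      have h : Finset.univ.filter (fun a : Fin (m + 2 * r + 1) =>
        r ≤ (a : ℕ) ∧ (a : ℕ) + r + 2 ≤ m + 2 * r + 1) =
          Finset.Ico ⟨r, by omega⟩ ⟨m + r, by omega⟩ := by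
        ext a
        simp only [Finset.mem_filter, Finset.mem_univ, true_and, Finset.mem_Ico,
          Fin.lt_def, Fin.le_def]
        omega
      rw [h, Fin.card_Ico]
      simp
    rw [← Finset.card_filter_add_card_filter_not (fun a => muJLW lam a = 1),
      Finset.filter_filter, Finset.filter_filter] at this
    simpa only [and_assoc] using this
  have e3 := congrArg (fun x => r * x) e2
  rw [mul_add] at e3
  linarith

end

open Classical in
/-- The Jacobian computation of Lemma 3.4 of the paper: with `d = m + 2r + 1`,
`μ_i = 1` for `i ∈ {1,…,r} ∪ {d-r,…,d}`, `N` and `φ(X) = -N⁻¹XᵀN` as above (so that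
`φ(E_{i,j}) = -(λ_{d+1-i}/λ_{d+1-j})·E_{d+1-j,d+1-i}`), the map `φ` preserves `𝔫`,
`id - φ` induces an endomorphism of `𝔫/𝔫^φ`, and its determinant equals
`2^{r²+r+r·m''} · (∏_{r+1 ≤ i ≤ d-r-1, μ_i ≠ 1} (1 - μ_i))^r`, where
`m'' = #{i : r+1 ≤ i ≤ d-r-1, μ_i = 1}`. -/
theorem jacobian_det_twisted_unipotent (F : Type*) [Field F] (hF : ringChar F ≠ 2)
    (r m : ℕ) (lam : Fin (m + 2 * r + 1) → Fˣ)
    (hmu : ∀ a : Fin (m + 2 * r + 1),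
      ((a : ℕ) < r ∨ m + r ≤ (a : ℕ)) → muJLW lam a = 1) :
    -- φ(E_{i,j}) = -(λ_{d+1-i}/λ_{d+1-j}) E_{d+1-j, d+1-i}
    (∀ i j : Fin (m + 2 * r + 1),
      phiJLW F (m + 2 * r + 1) lam (Matrix.single i j (1 : F))
        = (-((lam (revIdxJLW i) : F) * (((lam (revIdxJLW j))⁻¹ : Fˣ) : F))) •
            Matrix.single (revIdxJLW j) (revIdxJLW i) (1 : F)) ∧
    -- φ(𝔫) = 𝔫
    (⇑(phiJLW F (m + 2 * r + 1) lam) ''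
        (nSubJLW F (m + 2 * r + 1) r : Set (Matrix (Fin (m + 2 * r + 1)) (Fin (m + 2 * r + 1)) F))
      = (nSubJLW F (m + 2 * r + 1) r :
          Set (Matrix (Fin (m + 2 * r + 1)) (Fin (m + 2 * r + 1)) F))) ∧
    -- id - φ induces an endomorphism of 𝔫/𝔫^φ, whose determinant is as stated
    (∃ ψ : (↥(nSubJLW F (m + 2 * r + 1) r) ⧸ fixSubJLW F (m + 2 * r + 1) r lam) →ₗ[F]
           (↥(nSubJLW F (m + 2 * r + 1) r) ⧸ fixSubJLW F (m + 2 * r + 1) r lam),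
      (∀ X : ↥(nSubJLW F (m + 2 * r + 1) r), ∃ Y : ↥(nSubJLW F (m + 2 * r + 1) r),
        (Y : Matrix (Fin (m + 2 * r + 1)) (Fin (m + 2 * r + 1)) F)
          = (X : Matrix (Fin (m + 2 * r + 1)) (Fin (m + 2 * r + 1)) F)
            - phiJLW F (m + 2 * r + 1) lam
                (X : Matrix (Fin (m + 2 * r + 1)) (Fin (m + 2 * r + 1)) F)) ∧
      (∀ X Y : ↥(nSubJLW F (m + 2 * r + 1) r),
        (Y : Matrix (Fin (m + 2 * r + 1)) (Fin (m + 2 * r + 1)) F)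
          = (X : Matrix (Fin (m + 2 * r + 1)) (Fin (m + 2 * r + 1)) F)
            - phiJLW F (m + 2 * r + 1) lam
                (X : Matrix (Fin (m + 2 * r + 1)) (Fin (m + 2 * r + 1)) F) →
        ψ (Submodule.Quotient.mk X) = Submodule.Quotient.mk Y) ∧
      LinearMap.det ψ =
        (2 : F) ^ (r ^ 2 + r + r * (Finset.univ.filter
            (fun a : Fin (m + 2 * r + 1) =>
              r ≤ (a : ℕ) ∧ (a : ℕ) + r + 2 ≤ m + 2 * r + 1 ∧ muJLW lam a = 1)).card) *
        (∏ a ∈ Finset.univ.filter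
            (fun a : Fin (m + 2 * r + 1) =>
              r ≤ (a : ℕ) ∧ (a : ℕ) + r + 2 ≤ m + 2 * r + 1 ∧ muJLW lam a ≠ 1),
          (1 - muJLW lam a)) ^ r) := by
  refine ⟨phi_single' lam, phi_image lam, ?_⟩
  have h2 : (2 : F) ≠ 0 := Ring.two_ne_zero hF
  let P := (piLin lam).comp (nSubJLW F (m + 2 * r + 1) r).subtype
  have hs : Function.Surjective P := fun y => by
    obtain ⟨X, hX, h⟩ := pi_surj lam h2 hmu y
    exact ⟨⟨X, hX⟩, h⟩
  have hk : fixSubJLW F (m + 2 * r + 1) r lam = LinearMap.ker P := by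
    ext X
    rw [LinearMap.mem_ker]
    change _ ↔ piLin lam X.1 = 0
    rw [ker_pi lam hmu X.2]
    change X.1 ∈ LinearMap.ker _ ↔ _
    rw [LinearMap.mem_ker, LinearMap.sub_apply, sub_eq_zero]
    rfl
  let e := (Submodule.quotEquivOfEq _ _ hk).trans (P.quotKerEquivOfSurjective hs)
  have he : ∀ X, e (Submodule.Quotient.mk X) = piLin lam X.1 := fun X => rfl
  refine ⟨(e.symm : _ →ₗ[F] _) ∘ₗ DLin lam ∘ₗ (e.symm.symm : _ →ₗ[F] _), ?_, ?_, ?_⟩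
  · intro X
    exact ⟨⟨_, Submodule.sub_mem _ X.2 (phi_mem lam X.2)⟩, rfl⟩
  · intro X Y h
    change e.symm (DLin lam (e (Submodule.Quotient.mk X))) = _
    rw [LinearEquiv.symm_apply_eq, he, he, D_pi lam hmu, h]
  · rw [LinearMap.det_conj, det_D, card_A0, prod_B]
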